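/- Let ι be a finite type, A : Matrix ι ι ℚ, and let b : ℕ → ℤ be a finitely supported function with b(0) = 0 such that, in the field ℚ(X) of rational functions over ℚ, the image of det(1 - X·A) equals ∏_{k ≥ 1} (1 - X^k)^{b(k)}. Then for every positive integer m, m·b(m) = ∑_{k | m} μ(m/k)·trace(A^k), the sum ranging over the positive divisors k of m. -/

import Mathlib

lemma fm_leibniz_prod {R : Type*} [CommRing R] {k : Type*} [CommRing k] [Algebra k R]
    {ι : Type*} [DecidableEq ι]
    (D : Derivation k R R) (s : Finset ι) (f : ι → R) :
    D (∏ i ∈ s, f i) = ∑ i ∈ s, (∏ j ∈ s.erase i, f j) * D (f i) := by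
  induction s using Finset.induction_on with
  | empty => simp
  | insert a s ha ih =>
    rw [Finset.prod_insert ha, Finset.sum_insert ha, Derivation.leibniz, ih,
      Finset.erase_insert ha, smul_eq_mul, smul_eq_mul, Finset.mul_sum, add_comm]
    congr 1
    refine Finset.sum_congr rfl fun i hi => ?_
    have hia : a ≠ i := fun h => ha (h ▸ hi)
    rw [Finset.erase_insert_of_ne hia,
      Finset.prod_insert (fun h => ha (Finset.mem_of_mem_erase h)), mul_assoc]

lemma fm_jacobi {k : Type*} {R : Type*} [CommRing R] [CommRing k] [Algebra k R] {ι : Type*} [Fintype ι] [DecidableEq ι]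
    (D : Derivation k R R) (M : Matrix ι ι R) :
    D M.det = (M.adjugate * M.map D).trace := by
  have h1 : ∀ i, (M.adjugate * M.map D) i i = (M.updateCol i (fun j => D (M j i))).det := by
    intro i
    rw [← Matrix.cramer_apply, Matrix.cramer_eq_adjugate_mulVec]
    rfl
  simp only [Matrix.trace, Matrix.diag, h1, Matrix.det_apply, map_sum]
  rw [Finset.sum_comm]
  refine Finset.sum_congr rfl fun σ _ => ?_
  rw [← Finset.smul_sum, Units.smul_def, Units.smul_def, map_zsmul, fm_leibniz_prod]
  congr 1
  refine Finset.sum_congr rfl fun i _ => ?_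
  rw [← Finset.mul_prod_erase Finset.univ _ (Finset.mem_univ i), mul_comm]
  congr 1
  · simp
  · refine Finset.prod_congr rfl fun j hj => ?_
    rw [Matrix.updateCol_ne (Finset.ne_of_mem_erase hj)]

/-- `g` is `X` times the logarithmic derivative of `f`. -/
def FmLD (f g : PowerSeries ℚ) : Prop :=
  PowerSeries.X * PowerSeries.derivative ℚ f = f * g

lemma FmLD.one : FmLD 1 0 := by simp [FmLD]

lemma FmLD.mul {f f' g g' : PowerSeries ℚ} (h : FmLD f g) (h' : FmLD f' g') :
    FmLD (f * f') (g + g') := by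
  unfold FmLD at *
  rw [Derivation.leibniz, smul_eq_mul, smul_eq_mul]
  linear_combination f * h' + f' * h

lemma FmLD.pow {f g : PowerSeries ℚ} (h : FmLD f g) (n : ℕ) :
    FmLD (f ^ n) ((n : PowerSeries ℚ) * g) := by
  induction n with
  | zero => simpa using FmLD.one
  | succ n ih =>
    rw [pow_succ]
    convert ih.mul h using 1
    push_cast; ring

lemma FmLD.prod {s : Finset ℕ} {f g : ℕ → PowerSeries ℚ} (h : ∀ k ∈ s, FmLD (f k) (g k)) :
    FmLD (∏ k ∈ s, f k) (∑ k ∈ s, g k) := by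
  induction s using Finset.induction_on with
  | empty => simpa using FmLD.one
  | insert a s ha ih =>
    rw [Finset.prod_insert ha, Finset.sum_insert ha]
    exact (h a (Finset.mem_insert_self _ _)).mul
      (ih fun k hk => h k (Finset.mem_insert_of_mem hk))

lemma FmLD.unique {f g g' : PowerSeries ℚ} (hf : f ≠ 0) (h : FmLD f g) (h' : FmLD f g') :
    g = g' :=
  mul_left_cancel₀ hf (h.symm.trans h')

/-- The series with `m`-th coefficient `-k` when `k ∣ m`, `m > 0`. -/
noncomputable def fmG (k : ℕ) : PowerSeries ℚ :=
  PowerSeries.mk fun m => if 0 < m ∧ k ∣ m then -(k : ℚ) else 0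

lemma fmLD_cyc (k : ℕ) (hk : 0 < k) : FmLD (1 - PowerSeries.X ^ k) (fmG k) := by
  unfold FmLD
  obtain ⟨n, rfl⟩ : ∃ n, k = n + 1 := ⟨k - 1, by omega⟩
  rw [map_sub, Derivation.leibniz_pow, PowerSeries.derivative_X]
  have : PowerSeries.X * ((PowerSeries.derivative ℚ) 1 - (n + 1) • (PowerSeries.X : PowerSeries ℚ) ^ (n + 1 - 1) • (1 : PowerSeries ℚ)) = - PowerSeries.C ((n + 1 : ℕ) : ℚ) * PowerSeries.X ^ (n + 1) := by
    simp only [Derivation.map_one_eq_zero, nsmul_eq_mul, smul_eq_mul, Nat.add_sub_cancel, map_natCast]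
    ring
  rw [this]
  ext m
  rw [sub_mul, one_mul, map_sub, PowerSeries.coeff_X_pow_mul', neg_mul, map_neg,
    PowerSeries.coeff_C_mul, PowerSeries.coeff_X_pow]
  simp only [fmG, PowerSeries.coeff_mk]
  rcases lt_trichotomy m (n + 1) with h | h | h
  · have h2 : ¬ (0 < m ∧ n + 1 ∣ m) := fun h2 => by
      have := Nat.le_of_dvd h2.1 h2.2; omega
    rw [if_neg (by omega), if_neg h2, if_neg (by omega)]; simp
  · subst h; simp
  · rw [if_neg (by omega), if_pos h.le]
    have h2 : (0 < m ∧ n + 1 ∣ m) ↔ (0 < m - (n+1) ∧ n + 1 ∣ m - (n+1)) := by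
      rw [Nat.dvd_sub_self_right]
      constructor
      · rintro ⟨a, b⟩; exact ⟨by omega, Or.inl b⟩
      · rintro ⟨a, b | b⟩
        · exact ⟨by omega, b⟩
        · omega
    simp only [h2]; simp

lemma fmLD_charpolyRev {ι : Type*} [Fintype ι] [DecidableEq ι] (A : Matrix ι ι ℚ) :
    FmLD (A.charpolyRev : PowerSeries ℚ)
      (PowerSeries.mk fun m => if 0 < m then -(A ^ m).trace else 0) := by
  set M : Matrix ι ι (PowerSeries ℚ) :=
    1 - (PowerSeries.X : PowerSeries ℚ) • A.map PowerSeries.C with hM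
  have hdet : (A.charpolyRev : PowerSeries ℚ) = M.det := by
    rw [Matrix.charpolyRev, ← Polynomial.coeToPowerSeries.ringHom_apply, RingHom.map_det]
    congr 1
    ext i j : 2
    by_cases h : i = j <;> (simp [hM, h]; try ring)
  let S : Matrix ι ι (PowerSeries ℚ) := Matrix.of fun i j => PowerSeries.mk fun k => (A ^ (k+1)) i j
  have hMS : M * S = A.map PowerSeries.C := by
    ext i j m
    rw [hM, sub_mul, one_mul, Matrix.smul_mul, Matrix.sub_apply, Matrix.smul_apply, smul_eq_mul,
      map_sub, Matrix.mul_apply]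
    cases m with
    | zero => simp [S]
    | succ m =>
      rw [PowerSeries.coeff_succ_X_mul]
      simp [S, PowerSeries.coeff_C_mul, PowerSeries.coeff_C, pow_succ' A (m+1), Matrix.mul_apply]
  let D := PowerSeries.derivative ℚ
  have hD : M.map D = - A.map PowerSeries.C := by
    ext i j : 2
    have : ∀ x : PowerSeries ℚ, D x = PowerSeries.derivative ℚ x := fun _ => rfl
    by_cases h : i = j <;> simp [hM, h, this, Matrix.one_apply]
  have hJ := fm_jacobi D M
  rw [hD, ← hMS, Matrix.mul_neg, ← Matrix.mul_assoc, Matrix.adjugate_mul, Matrix.smul_mul,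
    Matrix.one_mul, Matrix.trace_neg, Matrix.trace_smul, smul_eq_mul] at hJ
  have hJ' : PowerSeries.derivative ℚ M.det = -(M.det * S.trace) := hJ
  unfold FmLD
  rw [hdet, hJ']
  have : (PowerSeries.mk fun m => if 0 < m then -(A ^ m).trace else 0) =
      - (PowerSeries.X * S.trace) := by
    ext m
    cases m with
    | zero => simp
    | succ m =>
      rw [map_neg, PowerSeries.coeff_succ_X_mul]
      simp [S, Matrix.trace]
  rw [this]; ring

lemma fm_trace {ι : Type*} [Fintype ι] [DecidableEq ι]
    (A : Matrix ι ι ℚ) (b : ℕ →₀ ℤ) (hb0 : b 0 = 0)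
    (hshape : algebraMap (Polynomial ℚ) (RatFunc ℚ) A.charpolyRev =
      ∏ k ∈ b.support, ((1 : RatFunc ℚ) - RatFunc.X ^ k) ^ (b k)) (m : ℕ) (hm : 0 < m) :
    ∑ k ∈ m.divisors, (k : ℚ) * (b k : ℚ) = (A ^ m).trace := by
  have hpos : ∀ k ∈ b.support, 0 < k := fun k hk => by
    rcases Nat.eq_zero_or_pos k with rfl | h
    · simp [hb0] at hk
    · exact h
  have hne : ∀ k, 0 < k → (1 - Polynomial.X ^ k : Polynomial ℚ) ≠ 0 := fun k hk h => by
    have := congrArg (Polynomial.eval 0) h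
    simp [hk.ne'] at this
  have hpoly : A.charpolyRev * ∏ k ∈ b.support, (1 - Polynomial.X ^ k : Polynomial ℚ) ^ (-b k).toNat
      = ∏ k ∈ b.support, (1 - Polynomial.X ^ k : Polynomial ℚ) ^ (b k).toNat := by
    apply RatFunc.algebraMap_injective ℚ
    rw [map_mul, hshape, map_prod, map_prod, ← Finset.prod_mul_distrib]
    refine Finset.prod_congr rfl fun k hk => ?_
    have h0 : (1 - RatFunc.X ^ k : RatFunc ℚ) ≠ 0 := by
      have := (map_ne_zero_iff _ (RatFunc.algebraMap_injective ℚ)).2 (hne k (hpos k hk))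
      simpa using this
    simp only [map_pow, map_sub, map_one, RatFunc.algebraMap_X]
    generalize (1 - RatFunc.X ^ k : RatFunc ℚ) = x at h0 ⊢
    rw [← zpow_natCast, ← zpow_natCast, ← zpow_add₀ h0]
    congr 1
    omega
  have hps := congrArg (Polynomial.coeToPowerSeries.ringHom (R := ℚ)) hpoly
  simp only [map_mul, map_prod, map_pow, map_sub, map_one,
    Polynomial.coeToPowerSeries.ringHom_apply, Polynomial.coe_X] at hps
  have hR : FmLD (∏ k ∈ b.support, (1 - PowerSeries.X ^ k : PowerSeries ℚ) ^ (b k).toNat) _ :=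
    FmLD.prod fun k hk => (fmLD_cyc k (hpos k hk)).pow _
  have hL := (fmLD_charpolyRev A).mul (FmLD.prod (s := b.support)
    (f := fun k => (1 - PowerSeries.X ^ k : PowerSeries ℚ) ^ (-b k).toNat)
    fun k hk => (fmLD_cyc k (hpos k hk)).pow _)
  rw [hps] at hL
  have hne' : (∏ k ∈ b.support, (1 - PowerSeries.X ^ k : PowerSeries ℚ) ^ (b k).toNat) ≠ 0 := by
    refine Finset.prod_ne_zero_iff.2 fun k hk => pow_ne_zero _ fun h => ?_
    have := congrArg PowerSeries.constantCoeff h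
    simp [(hpos k hk).ne'] at this
  have h := congrArg (PowerSeries.coeff m) (hL.unique hne' hR)
  simp only [map_add, map_sum, PowerSeries.coeff_mk, if_pos hm, ← map_natCast PowerSeries.C,
    PowerSeries.coeff_C_mul] at h
  have h3 : (A ^ m).trace = ∑ k ∈ b.support, ((b k : ℚ)) * (-PowerSeries.coeff m (fmG k)) := by
    have h4 : ∀ k ∈ b.support, ((b k : ℚ)) * (-PowerSeries.coeff m (fmG k)) =
      ((-b k).toNat : ℚ) * PowerSeries.coeff m (fmG k) - ((b k).toNat : ℚ) * PowerSeries.coeff m (fmG k) := by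
      intro k _
      have : (b k : ℚ) = ((b k).toNat : ℚ) - ((-b k).toNat : ℚ) := by
        have : b k = ((b k).toNat : ℤ) - ((-b k).toNat : ℤ) := by omega
        exact_mod_cast congrArg (Int.cast : ℤ → ℚ) this
      rw [this]; ring
    rw [Finset.sum_congr rfl h4, Finset.sum_sub_distrib]
    linarith
  rw [h3]
  have h5 : ∀ k ∈ b.support, ((b k : ℚ)) * (-PowerSeries.coeff m (fmG k)) =
      if k ∣ m then (k : ℚ) * (b k : ℚ) else 0 := by
    intro k _
    simp only [fmG, PowerSeries.coeff_mk, hm, true_and]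
    split_ifs <;> ring
  rw [Finset.sum_congr rfl h5, ← Finset.sum_filter]
  symm
  apply Finset.sum_subset
  · intro k hk
    rw [Finset.mem_filter] at hk
    exact Nat.mem_divisors.2 ⟨hk.2, hm.ne'⟩
  · intro k hk hk'
    have : b k = 0 := by
      by_contra h0
      exact hk' (Finset.mem_filter.2 ⟨Finsupp.mem_support_iff.2 h0, (Nat.mem_divisors.1 hk).1⟩)
    simp [this]


open ArithmeticFunction in
/-- Let `A` be a square matrix over `ℚ` with cycle shape `b`, i.e. the
image in `ℚ(X)` of `det(1 - X·A)` equals `∏_{k ≥ 1} (1 - X^k)^{b k}` for a finitely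
supported `b : ℕ → ℤ` with `b 0 = 0`.  Then for every positive integer `m`,
`m·b(m) = ∑_{k ∣ m} μ(m/k)·trace(A^k)`. -/
theorem fake_monster.stmt11 {ι : Type*} [Fintype ι] [DecidableEq ι]
    (A : Matrix ι ι ℚ) (b : ℕ →₀ ℤ) (hb0 : b 0 = 0)
    (hshape : algebraMap (Polynomial ℚ) (RatFunc ℚ) A.charpolyRev =
      ∏ k ∈ b.support, ((1 : RatFunc ℚ) - RatFunc.X ^ k) ^ (b k)) :
    ∀ m : ℕ, 0 < m →
      (m : ℚ) * ((b m : ℤ) : ℚ) =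
        ∑ k ∈ m.divisors, ((moebius (m / k) : ℤ) : ℚ) * Matrix.trace (A ^ k) := by
  intro m hm
  have h := (sum_eq_iff_sum_mul_moebius_eq (f := fun k : ℕ => (k : ℚ) * ((b k : ℤ) : ℚ))
    (g := fun k => Matrix.trace (A ^ k))).1 (fun n hn => fm_trace A b hb0 hshape n hn) m hm
  rw [← h, Nat.sum_divisorsAntidiagonal' (f := fun x y => ((moebius x : ℤ) : ℚ) * Matrix.trace (A ^ y))]
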